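/- (Solmon's identity on the sphere, k = 1.) Let d ≥ 2. There exists a constant c_d > 0, depending only on d, such that for every nonnegative Borel measurable function f : ℝ^d → [0,∞], ∫_{S^{d−1}} ∫_{v^⊥} |x| f(x) dH^{d−1}(x) dH^{d−1}(v) = c_d ∫_{ℝ^d} f(x) dx, where for each unit vector v ∈ S^{d−1}, v^⊥ denotes the hyperplane in ℝ^d orthogonal to v, H^{d−1} denotes (d−1)-dimensional Hausdorff measure (restricted to v^⊥ in the inner integral and to S^{d−1} in the outer integral), and dx is Lebesgue measure on ℝ^d. -/

import Mathlib

open MeasureTheory Real Metric Set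
open scoped RealInnerProductSpace ENNReal NNReal

noncomputable section

/-!
The left-hand side of Solmon's identity integrates `f` against a measure on `ℝ^d` which is
invariant under the orthogonal group, and whose mass on the ball of radius `r` is proportional to
`r ^ d`, because `|x| dH^{d-1}(x)` on a hyperplane is homogeneous of degree `d`. It is therefore a
multiple of Lebesgue measure, since an orthogonally invariant measure `μ` that is finite on balls
is determined by its masses on centred balls. To see the latter for finite `μ` without Haar
measure on `O(d)`, let `σ` be surface measure on the sphere: both characteristic functions are
radial, so averaging that of `μ` over `σ` and exchanging integrals gives
`σ(S^{d-1}) φ_μ(t) = ∫ φ_σ(|x| t) dμ(x)`, which involves only the distribution of `|x|` under `μ`.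
-/

section Solmon

open Module

variable {E : Type*} [NormedAddCommGroup E] [InnerProductSpace ℝ E]

section Hemisphere

/-- The closed unit hemisphere with pole `v`, as a graph over the closed unit ball of `v^⊥`. It is
the chart used to compare `H^{d-1}` on the sphere with `H^{d-1}` on a hyperplane. Outside the unit
ball the square root is `0`, so the values there are not on the sphere. -/
def hemisphereGraph (v : E) (y : (ℝ ∙ v)ᗮ) : E := y + √(1 - ‖y‖ ^ 2) • v

variable {v : E}

lemma norm_sq_orthogonal_add_smul (hv : ‖v‖ = 1) (y : (ℝ ∙ v)ᗮ) (c : ℝ) :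
    ‖(y : E) + c • v‖ ^ 2 = ‖y‖ ^ 2 + c ^ 2 := by
  have horth : ⟪(y : E), c • v⟫ = 0 := by
    rw [inner_smul_right, Submodule.mem_orthogonal_singleton_iff_inner_left.1 y.2, mul_zero]
  rw [sq, norm_add_sq_eq_norm_sq_add_norm_sq_real horth, ← sq, ← sq, norm_smul, hv, mul_one,
    norm_eq_abs, sq_abs, Submodule.coe_norm]

lemma hemisphereGraph_mem_sphere (hv : ‖v‖ = 1) {y : (ℝ ∙ v)ᗮ} (hy : ‖y‖ ≤ 1) :
    hemisphereGraph v y ∈ sphere (0 : E) 1 := by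
  have hy' : 0 ≤ 1 - ‖y‖ ^ 2 := sub_nonneg.2 (pow_le_one₀ (norm_nonneg y) hy)
  rw [mem_sphere_zero_iff_norm, ← pow_eq_one_iff_of_nonneg (norm_nonneg _) two_ne_zero,
    hemisphereGraph, norm_sq_orthogonal_add_smul hv, sq_sqrt hy', add_sub_cancel]

lemma orthogonalProjectionOnto_hemisphereGraph (y : (ℝ ∙ v)ᗮ) :
    (ℝ ∙ v)ᗮ.orthogonalProjectionOnto (hemisphereGraph v y) = y := by
  simp [hemisphereGraph, Submodule.orthogonalProjectionOnto_orthogonalComplement_singleton_eq_zero]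

lemma hemisphereGraph_orthogonalProjectionOnto (hv : ‖v‖ = 1) {x : E} (hx : x ∈ sphere (0 : E) 1)
    (hvx : 0 ≤ ⟪v, x⟫) : hemisphereGraph v ((ℝ ∙ v)ᗮ.orthogonalProjectionOnto x) = x := by
  have hdecomp : (ℝ ∙ v)ᗮ.orthogonalProjectionOnto x + ⟪v, x⟫ • v = x := by
    rw [← Submodule.starProjection_unit_singleton ℝ hv, add_comm]
    exact (ℝ ∙ v).starProjection_add_starProjection_orthogonal x
  have hpythagoras : ⟪v, x⟫ ^ 2 = 1 - ‖(ℝ ∙ v)ᗮ.orthogonalProjectionOnto x‖ ^ 2 := by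
    have h := norm_sq_orthogonal_add_smul hv ((ℝ ∙ v)ᗮ.orthogonalProjectionOnto x) ⟪v, x⟫
    rw [hdecomp, mem_sphere_zero_iff_norm.1 hx] at h
    linarith
  rw [hemisphereGraph, ← hpythagoras, sqrt_sq hvx, hdecomp]

lemma contDiffAt_hemisphereGraph (v : E) : ContDiffAt ℝ 1 (hemisphereGraph v) 0 := by
  have hsqrt : ContDiffAt ℝ 1 (fun y : (ℝ ∙ v)ᗮ ↦ √(1 - ‖y‖ ^ 2)) 0 :=
    (contDiffAt_const.sub (contDiff_norm_sq ℝ).contDiffAt).sqrt (by simp)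
  exact (ℝ ∙ v)ᗮ.subtypeL.contDiff.contDiffAt.add (hsqrt.smul contDiffAt_const)

end Hemisphere

section HausdorffMeasure

section NormedSpace

variable {F : Type*} [NormedAddCommGroup F]

lemma ae_norm_eq_one_restrict_sphere [MeasurableSpace F] [OpensMeasurableSpace F]
    (μ : Measure F) : ∀ᵐ v ∂μ.restrict (sphere 0 1), ‖v‖ = 1 :=
  (ae_restrict_mem isClosed_sphere.measurableSet).mono fun _ hv ↦ mem_sphere_zero_iff_norm.1 hv

variable [NormedSpace ℝ F]

lemma finrank_sub_one_nonneg [FiniteDimensional ℝ F] [Nontrivial F] : 0 ≤ (finrank ℝ F : ℝ) - 1 :=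
  sub_nonneg.2 (mod_cast Module.finrank_pos (R := ℝ) (M := F))

variable [MeasurableSpace F] [BorelSpace F]

lemma hausdorffMeasure_restrict_submodule {s : ℝ} (hs : 0 ≤ s) (W : Submodule ℝ F) :
    (μH[s] : Measure F).restrict W = (μH[s] : Measure W).map Subtype.val := by
  rw [isometry_subtype_coe.map_hausdorffMeasure (Or.inl hs), Subtype.range_coe]

lemma map_smul_hausdorffMeasure {s : ℝ} (hs : 0 ≤ s) {r : ℝ} (hr : 0 < r) :
    (μH[s] : Measure F).map (r • ·) = ENNReal.ofReal (r ^ (-s)) • μH[s] := by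
  ext A hA
  rw [Measure.map_apply (measurable_const_smul r) hA, preimage_smul₀ hr.ne',
    Measure.hausdorffMeasure_smul₀ hs (inv_ne_zero hr.ne'), Measure.smul_apply, ENNReal.smul_def,
    rpow_neg hr.le, ← inv_rpow hr.le]
  congr 1
  rw [← ENNReal.ofReal_coe_nnreal]
  simp [abs_of_pos hr]

end NormedSpace

variable [MeasurableSpace E] [BorelSpace E] [FiniteDimensional ℝ E]

lemma isAddHaarMeasure_hausdorffMeasure_orthogonal_singleton {v : E} (hv : v ≠ 0) :
    Measure.IsAddHaarMeasure (μH[(finrank ℝ E : ℝ) - 1] : Measure (ℝ ∙ v)ᗮ) := by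
  have hdim : (finrank ℝ E : ℝ) - 1 = finrank ℝ (ℝ ∙ v)ᗮ := by
    rw [← (ℝ ∙ v).finrank_add_finrank_orthogonal, finrank_span_singleton hv]
    simp
  rw [hdim]
  infer_instance

open Filter Topology in
lemma hausdorffMeasure_sphere_lt_top :
    (μH[(finrank ℝ E : ℝ) - 1] : Measure E) (sphere 0 1) < ∞ := by
  refine (isCompact_sphere (0 : E) 1).measure_lt_top_of_nhdsWithin fun v hv ↦ ?_
  rw [mem_sphere_zero_iff_norm] at hv
  have hv₀ : v ≠ 0 := norm_ne_zero_iff.1 (by simp [hv])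
  have : Nontrivial E := ⟨v, 0, hv₀⟩
  have := isAddHaarMeasure_hausdorffMeasure_orthogonal_singleton hv₀
  obtain ⟨C, t, ht, hLip⟩ := (contDiffAt_hemisphereGraph v).exists_lipschitzOnWith
  set t' := t ∩ closedBall 0 1
  have ht' : t' ∈ 𝓝 ((ℝ ∙ v)ᗮ.orthogonalProjectionOnto v) := by
    rw [Submodule.orthogonalProjectionOnto_orthogonalComplement_singleton_eq_zero]
    exact inter_mem ht (closedBall_mem_nhds _ one_pos)
  refine ⟨hemisphereGraph v '' t', ?_, ?_⟩
  · have hproj : ∀ᶠ x in 𝓝 v, (ℝ ∙ v)ᗮ.orthogonalProjectionOnto x ∈ t' :=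
      (ContinuousLinearMap.continuous _).continuousAt.eventually_mem ht'
    have hpos : ∀ᶠ x in 𝓝 v, 0 < ⟪v, x⟫ :=
      continuousAt_const.eventually_lt (by fun_prop) (by simp [hv])
    filter_upwards [self_mem_nhdsWithin, hproj.filter_mono nhdsWithin_le_nhds,
      hpos.filter_mono nhdsWithin_le_nhds] with x hx hxt hvx
    exact ⟨_, hxt, hemisphereGraph_orthogonalProjectionOnto hv hx hvx.le⟩
  · refine ((hLip.mono inter_subset_left).hausdorffMeasure_image_le
      finrank_sub_one_nonneg).trans_lt (ENNReal.mul_lt_top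
        (ENNReal.rpow_lt_top_of_nonneg finrank_sub_one_nonneg ENNReal.coe_ne_top) ?_)
    exact (measure_mono inter_subset_right).trans_lt measure_closedBall_lt_top

lemma hausdorffMeasure_sphere_pos [Nontrivial E] :
    0 < (μH[(finrank ℝ E : ℝ) - 1] : Measure E) (sphere 0 1) := by
  obtain ⟨v, hv⟩ := exists_norm_eq E zero_le_one
  have := isAddHaarMeasure_hausdorffMeasure_orthogonal_singleton
    (norm_ne_zero_iff.1 (hv.trans_ne one_ne_zero))
  calc 0 < μH[(finrank ℝ E : ℝ) - 1] (ball (0 : (ℝ ∙ v)ᗮ) 1) := measure_ball_pos _ _ one_pos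
    _ ≤ μH[(finrank ℝ E : ℝ) - 1] ((ℝ ∙ v)ᗮ.orthogonalProjectionOnto '' sphere (0 : E) 1) := by
      refine measure_mono fun y hy ↦ ⟨hemisphereGraph v y, ?_, ?_⟩
      · exact hemisphereGraph_mem_sphere hv (mem_ball_zero_iff.1 hy).le
      · exact orthogonalProjectionOnto_hemisphereGraph y
    _ ≤ μH[(finrank ℝ E : ℝ) - 1] (sphere (0 : E) 1) :=
      hausdorffMeasure_orthogonalProjectionOnto_le _ _ _ finrank_sub_one_nonneg

end HausdorffMeasure

/-- Invariance of a measure under the orthogonal group of `E`, which is encoded as the linear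
isometric automorphisms. Such measures are determined by their masses on centred balls. -/
def IsOrthogonallyInvariant [MeasurableSpace E] (μ : Measure E) : Prop :=
  ∀ U : E ≃ₗᵢ[ℝ] E, MeasurePreserving U μ μ

lemma exists_linearIsometryEquiv_apply_eq {x y : E} (h : ‖x‖ = ‖y‖) :
    ∃ U : E ≃ₗᵢ[ℝ] E, U x = y :=
  ⟨_, Submodule.reflection_sub h⟩

lemma integral_charFun_smul_comm [MeasurableSpace E] [BorelSpace E] [SecondCountableTopology E]
    (μ ν : Measure E) [IsFiniteMeasure μ] [IsFiniteMeasure ν] (c : ℝ) :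
    ∫ x, charFun ν (c • x) ∂μ = ∫ y, charFun μ (c • y) ∂ν := by
  simp_rw [charFun_apply]
  rw [integral_integral_swap]
  · simp only [inner_smul_right, real_inner_comm]
  · refine Integrable.of_bound (C := 1) (Continuous.aestronglyMeasurable ?_) (.of_forall fun p ↦ ?_)
    · unfold Function.uncurry
      fun_prop
    · simp [Function.uncurry, Complex.norm_exp]

namespace IsOrthogonallyInvariant

variable [MeasurableSpace E] {μ ν : Measure E}

lemma smul (hμ : IsOrthogonallyInvariant μ) (c : ℝ≥0∞) : IsOrthogonallyInvariant (c • μ) :=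
  fun U ↦ (hμ U).smul_measure c

lemma restrict (hμ : IsOrthogonallyInvariant μ) {s : Set E} (hs : MeasurableSet s)
    (hU : ∀ U : E ≃ₗᵢ[ℝ] E, U ⁻¹' s = s) : IsOrthogonallyInvariant (μ.restrict s) := fun U ↦ by
  simpa only [hU] using (hμ U).restrict_preimage hs

variable [BorelSpace E]

lemma hausdorffMeasure (s : ℝ) : IsOrthogonallyInvariant (μH[s] : Measure E) :=
  fun U ↦ U.toIsometryEquiv.measurePreserving_hausdorffMeasure s

lemma hausdorffMeasure_restrict_sphere (s : ℝ) :
    IsOrthogonallyInvariant ((μH[s] : Measure E).restrict (sphere 0 1)) :=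
  (hausdorffMeasure s).restrict isClosed_sphere.measurableSet fun U ↦ by simp

lemma charFun_eq_of_norm_eq (hμ : IsOrthogonallyInvariant μ) {x y : E} (h : ‖x‖ = ‖y‖) :
    charFun μ x = charFun μ y := by
  obtain ⟨U, rfl⟩ := exists_linearIsometryEquiv_apply_eq h
  have hU := (hμ U).integral_comp U.toHomeomorph.measurableEmbedding
    fun z ↦ Complex.exp (⟪z, U x⟫ * Complex.I)
  simpa only [charFun_apply, U.inner_map_map] using hU

lemma charFun_eq_integral_map_norm [SecondCountableTopology E] {σ : Measure E}
    [IsFiniteMeasure σ] [IsFiniteMeasure μ]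
    (hσ : IsOrthogonallyInvariant σ) (hμ : IsOrthogonallyInvariant μ)
    (hσ₁ : ∀ᵐ u ∂σ, ‖u‖ = 1) (t : E) :
    σ.real univ * charFun μ t = ∫ r, charFun σ (r • t) ∂μ.map norm :=
  calc (σ.real univ : ℂ) * charFun μ t = ∫ _, charFun μ t ∂σ := by simp
    _ = ∫ u, charFun μ (‖t‖ • u) ∂σ := by
      refine integral_congr_ae (hσ₁.mono fun u hu ↦ hμ.charFun_eq_of_norm_eq ?_)
      simp [norm_smul, hu]
    _ = ∫ x, charFun σ (‖t‖ • x) ∂μ := integral_charFun_smul_comm σ μ ‖t‖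
    _ = ∫ x, charFun σ (‖x‖ • t) ∂μ := by
      refine integral_congr_ae (.of_forall fun x ↦ hσ.charFun_eq_of_norm_eq ?_)
      simp [norm_smul, mul_comm]
    _ = ∫ r, charFun σ (r • t) ∂μ.map norm :=
      (integral_map measurable_norm.aemeasurable
        (stronglyMeasurable_charFun.comp_measurable
          (measurable_id.smul_const t)).aestronglyMeasurable).symm

variable [FiniteDimensional ℝ E]

lemma ext_of_map_norm [Nontrivial E] [IsFiniteMeasure μ] [IsFiniteMeasure ν]
    (hμ : IsOrthogonallyInvariant μ) (hν : IsOrthogonallyInvariant ν)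
    (h : μ.map norm = ν.map norm) : μ = ν := by
  set σ := (μH[(finrank ℝ E : ℝ) - 1] : Measure E).restrict (sphere 0 1)
  have hσ : IsOrthogonallyInvariant σ := hausdorffMeasure_restrict_sphere _
  have hσ₁ : ∀ᵐ u ∂σ, ‖u‖ = 1 := ae_norm_eq_one_restrict_sphere _
  have : IsFiniteMeasure σ := ⟨by simpa [σ] using hausdorffMeasure_sphere_lt_top⟩
  have hσ₀ : (σ.real univ : ℂ) ≠ 0 := by
    simpa [σ, measureReal_eq_zero_iff hausdorffMeasure_sphere_lt_top.ne]
      using hausdorffMeasure_sphere_pos.ne'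
  refine Measure.ext_of_charFun (funext fun t ↦ mul_left_cancel₀ hσ₀ ?_)
  rw [charFun_eq_integral_map_norm hσ hμ hσ₁, h, charFun_eq_integral_map_norm hσ hν hσ₁]

lemma ext_of_closedBall [Nontrivial E]
    (hμ : IsOrthogonallyInvariant μ) (hν : IsOrthogonallyInvariant ν)
    (hfin : ∀ r, μ (closedBall 0 r) < ∞)
    (h : ∀ r, 0 ≤ r → μ (closedBall 0 r) = ν (closedBall 0 r)) : μ = ν := by
  rw [← μ.restrict_univ, ← ν.restrict_univ, ← iUnion_closedBall_nat (0 : E),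
    Measure.restrict_iUnion_congr]
  intro n
  have : IsFiniteMeasure (μ.restrict (closedBall 0 n)) := ⟨by simpa using hfin n⟩
  have : IsFiniteMeasure (ν.restrict (closedBall 0 n)) :=
    ⟨by simpa [← h n n.cast_nonneg] using hfin n⟩
  have hU (U : E ≃ₗᵢ[ℝ] E) : U ⁻¹' closedBall 0 n = closedBall 0 n := by simp
  refine ext_of_map_norm (hμ.restrict measurableSet_closedBall hU)
    (hν.restrict measurableSet_closedBall hU) (Measure.ext_of_Iic _ _ fun r ↦ ?_)
  have hIic : MeasurableSet (norm ⁻¹' Iic r : Set E) := measurable_norm measurableSet_Iic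
  rw [Measure.map_apply measurable_norm measurableSet_Iic, Measure.restrict_apply hIic,
    Measure.map_apply measurable_norm measurableSet_Iic, Measure.restrict_apply hIic]
  have hball : norm ⁻¹' Iic r ∩ closedBall (0 : E) n = closedBall 0 (min r n) := by
    ext x
    simp
  rw [hball]
  rcases lt_or_ge (min r n) 0 with hneg | hnonneg
  · simp [closedBall_eq_empty.2 hneg]
  · exact h _ hnonneg

lemma eq_smul_volume [Nontrivial E] (hμ : IsOrthogonallyInvariant μ)
    (hfin : μ (closedBall 0 1) < ∞)
    (hhom : ∀ r, 0 ≤ r →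
      μ (closedBall 0 r) = ENNReal.ofReal (r ^ finrank ℝ E) * μ (closedBall 0 1)) :
    μ = (μ (closedBall 0 1) / volume (closedBall (0 : E) 1)) • volume := by
  refine hμ.ext_of_closedBall (smul (fun U ↦ U.measurePreserving) _) (fun r ↦ ?_) fun r hr ↦ ?_
  · have hmono : closedBall (0 : E) r ⊆ closedBall 0 |r| :=
      closedBall_subset_closedBall (le_abs_self r)
    refine (measure_mono hmono).trans_lt ?_
    rw [hhom _ (abs_nonneg r)]
    exact ENNReal.mul_lt_top ENNReal.ofReal_lt_top hfin
  · rw [hhom r hr, Measure.smul_apply, smul_eq_mul, Measure.addHaar_closedBall' _ _ hr,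
      mul_left_comm, ENNReal.div_mul_cancel (measure_closedBall_pos _ _ one_pos).ne'
        measure_closedBall_lt_top.ne]

end IsOrthogonallyInvariant

section HyperplaneMeasure

lemma measurable_map_of_measurable_uncurry {α β γ : Type*} [MeasurableSpace α]
    [MeasurableSpace β] [MeasurableSpace γ] (μ : Measure β) [SFinite μ] {f : α → β → γ}
    (hf : Measurable (Function.uncurry f)) : Measurable fun a ↦ μ.map (f a) := by
  have hmap (a : α) : μ.map (f a) = (μ.map (Prod.mk a)).map (Function.uncurry f) :=
    (Measure.map_map hf measurable_prodMk_left).symm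
  simp_rw [hmap]
  exact (Measure.measurable_map _ hf).comp Measurable.map_prodMk_left

variable [MeasurableSpace E] [BorelSpace E]

/-- The measure `|x| dH^s(x)` on the hyperplane `v^⊥`, the inner measure of Solmon's identity when
`s = d - 1`. It is a measure on the ambient space, so that measures for different `v` can be
compared and averaged. -/
def hyperplaneMeasure (s : ℝ) (v : E) : Measure E :=
  (μH[s].restrict {x | ⟪v, x⟫ = 0}).withDensity fun x ↦ ENNReal.ofReal ‖x‖

lemma measurableSet_inner_eq_zero (v : E) : MeasurableSet {x | ⟪v, x⟫ = 0} :=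
  (isClosed_eq (by fun_prop) (by fun_prop)).measurableSet

lemma lintegral_hyperplaneMeasure (s : ℝ) (v : E) {f : E → ℝ≥0∞} (hf : Measurable f) :
    ∫⁻ x, f x ∂hyperplaneMeasure s v =
      ∫⁻ x in {x | ⟪v, x⟫ = 0}, ENNReal.ofReal ‖x‖ * f x ∂μH[s] :=
  lintegral_withDensity_eq_lintegral_mul _ (by fun_prop) hf

lemma map_hyperplaneMeasure (s : ℝ) (v : E) (U : E ≃ₗᵢ[ℝ] E) :
    (hyperplaneMeasure s v).map U = hyperplaneMeasure s (U v) := by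
  have hpreimage : U ⁻¹' {x | ⟪U v, x⟫ = 0} = {x | ⟪v, x⟫ = 0} := by
    ext x
    simp
  have hU : MeasurePreserving U (μH[s].restrict {x | ⟪v, x⟫ = 0})
      (μH[s].restrict {x | ⟪U v, x⟫ = 0}) := by
    simpa only [hpreimage] using (IsOrthogonallyInvariant.hausdorffMeasure s U).restrict_preimage
      (measurableSet_inner_eq_zero (U v))
  ext A hA
  rw [Measure.map_apply hU.measurable hA, hyperplaneMeasure, hyperplaneMeasure,
    withDensity_apply _ (hU.measurable hA), withDensity_apply _ hA,
    ← hU.setLIntegral_comp_preimage hA (by fun_prop)]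
  simp only [LinearIsometryEquiv.norm_map]

lemma map_smul_hyperplaneMeasure {s : ℝ} (hs : 0 ≤ s) (v : E) {r : ℝ} (hr : 0 < r) :
    (hyperplaneMeasure s v).map (r • ·) =
      ENNReal.ofReal (r ^ (-(s + 1))) • hyperplaneMeasure s v := by
  have hsmul : Measurable (r • · : E → E) := measurable_const_smul r
  have hpreimage : (r • ·) ⁻¹' {x | ⟪v, x⟫ = 0} = {x | ⟪v, x⟫ = 0} := by
    ext x
    simp [inner_smul_right, hr.ne']
  have hmap : (μH[s].restrict {x | ⟪v, x⟫ = 0}).map (r • ·) =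
      ENNReal.ofReal (r ^ (-s)) • μH[s].restrict {x | ⟪v, x⟫ = 0} := by
    rw [← Measure.restrict_smul, ← map_smul_hausdorffMeasure hs hr,
      Measure.restrict_map hsmul (measurableSet_inner_eq_zero v), hpreimage]
  have hnorm (x : E) : ENNReal.ofReal ‖x‖ = ENNReal.ofReal r⁻¹ * ENNReal.ofReal ‖r • x‖ := by
    rw [← ENNReal.ofReal_mul (by positivity), norm_smul, norm_of_nonneg hr.le,
      inv_mul_cancel_left₀ hr.ne']
  ext A hA
  calc (hyperplaneMeasure s v).map (r • ·) A
    _ = ∫⁻ x in (r • ·) ⁻¹' A, ENNReal.ofReal r⁻¹ * ENNReal.ofReal ‖r • x‖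
          ∂μH[s].restrict {x | ⟪v, x⟫ = 0} := by
      rw [Measure.map_apply hsmul hA, hyperplaneMeasure, withDensity_apply _ (hsmul hA)]
      exact lintegral_congr hnorm
    _ = ENNReal.ofReal r⁻¹ * ∫⁻ x in A, ENNReal.ofReal ‖x‖
          ∂(μH[s].restrict {x | ⟪v, x⟫ = 0}).map (r • ·) := by
      rw [lintegral_const_mul _ (by fun_prop), setLIntegral_map hA (by fun_prop) hsmul]
    _ = ENNReal.ofReal (r ^ (-(s + 1))) * hyperplaneMeasure s v A := by
      rw [hmap, Measure.restrict_smul, lintegral_smul_measure, smul_eq_mul, ← mul_assoc,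
        ← ENNReal.ofReal_mul (by positivity), neg_add_rev, rpow_add hr, rpow_neg_one,
        hyperplaneMeasure, withDensity_apply _ hA]

lemma hyperplaneMeasure_closedBall {s : ℝ} (hs : 0 ≤ s) (v : E) {r : ℝ} (hr : 0 ≤ r) :
    hyperplaneMeasure s v (closedBall 0 r) =
      ENNReal.ofReal (r ^ (s + 1)) * hyperplaneMeasure s v (closedBall 0 1) := by
  rcases hr.eq_or_lt with rfl | hr
  · have hs' : s + 1 ≠ 0 := by positivity
    simp [hyperplaneMeasure, withDensity_apply _ (measurableSet_singleton (0 : E)), zero_rpow hs']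
  have hball : (r • ·) ⁻¹' closedBall (0 : E) r = closedBall 0 1 := by
    ext x
    simp [norm_smul, abs_of_pos hr, hr]
  rw [← hball, ← Measure.map_apply (measurable_const_smul r) measurableSet_closedBall,
    map_smul_hyperplaneMeasure hs v hr, Measure.smul_apply, smul_eq_mul, ← mul_assoc,
    ← ENNReal.ofReal_mul (by positivity), ← rpow_add hr, add_neg_cancel, rpow_zero,
    ENNReal.ofReal_one, one_mul]

lemma hyperplaneMeasure_closedBall_eq_of_norm_eq (s : ℝ) {v w : E} (h : ‖v‖ = ‖w‖) (r : ℝ) :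
    hyperplaneMeasure s v (closedBall 0 r) = hyperplaneMeasure s w (closedBall 0 r) := by
  obtain ⟨U, rfl⟩ := exists_linearIsometryEquiv_apply_eq h
  rw [← map_hyperplaneMeasure, Measure.map_apply U.continuous.measurable measurableSet_closedBall]
  simp

lemma hyperplaneMeasure_eq_map {s : ℝ} (hs : 0 ≤ s) (v : E) :
    hyperplaneMeasure s v = ((μH[s] : Measure (ℝ ∙ v)ᗮ).withDensity
      fun y ↦ ENNReal.ofReal ‖y‖).map Subtype.val := by
  have hperp : {x | ⟪v, x⟫ = 0} = ((ℝ ∙ v)ᗮ : Set E) := by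
    ext x
    simp [Submodule.mem_orthogonal_singleton_iff_inner_right]
  ext A hA
  rw [hyperplaneMeasure, hperp, hausdorffMeasure_restrict_submodule hs, withDensity_apply _ hA,
    setLIntegral_map hA (by fun_prop) measurable_subtype_coe,
    Measure.map_apply measurable_subtype_coe hA,
    withDensity_apply _ (measurable_subtype_coe hA)]
  rfl

variable [FiniteDimensional ℝ E] {v : E}

lemma sFinite_hyperplaneMeasure (hv : v ≠ 0) :
    SFinite (hyperplaneMeasure ((finrank ℝ E : ℝ) - 1) v) := by
  have : Nontrivial E := ⟨v, 0, hv⟩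
  have := isAddHaarMeasure_hausdorffMeasure_orthogonal_singleton hv
  rw [hyperplaneMeasure_eq_map finrank_sub_one_nonneg]
  infer_instance

lemma hyperplaneMeasure_closedBall_lt_top (hv : v ≠ 0) (r : ℝ) :
    hyperplaneMeasure ((finrank ℝ E : ℝ) - 1) v (closedBall 0 r) < ∞ := by
  have : Nontrivial E := ⟨v, 0, hv⟩
  have := isAddHaarMeasure_hausdorffMeasure_orthogonal_singleton hv
  rw [hyperplaneMeasure_eq_map finrank_sub_one_nonneg,
    Measure.map_apply measurable_subtype_coe measurableSet_closedBall,
    withDensity_apply _ (measurable_subtype_coe measurableSet_closedBall)]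
  refine setLIntegral_lt_top_of_le_nnreal (s := Subtype.val ⁻¹' closedBall (0 : E) r) ?_
    ⟨r.toNNReal, fun y hy ↦ ?_⟩
  · exact (measure_closedBall_lt_top (x := (0 : (ℝ ∙ v)ᗮ)) (r := r)).ne
  · exact ENNReal.ofReal_le_ofReal (mem_closedBall_zero_iff.1 hy)

lemma hyperplaneMeasure_closedBall_pos (hE : 2 ≤ finrank ℝ E) (hv : v ≠ 0) {r : ℝ} (hr : 0 < r) :
    0 < hyperplaneMeasure ((finrank ℝ E : ℝ) - 1) v (closedBall 0 r) := by
  have : Nontrivial E := ⟨v, 0, hv⟩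
  have : Nontrivial (ℝ ∙ v)ᗮ := by
    have h := (ℝ ∙ v).finrank_add_finrank_orthogonal
    rw [finrank_span_singleton hv] at h
    exact Module.nontrivial_of_finrank_pos (R := ℝ) (by omega)
  have := isAddHaarMeasure_hausdorffMeasure_orthogonal_singleton hv
  rw [hyperplaneMeasure_eq_map finrank_sub_one_nonneg,
    Measure.map_apply measurable_subtype_coe measurableSet_closedBall, pos_iff_ne_zero, ne_eq,
    withDensity_apply_eq_zero (by fun_prop)]
  have hsupport : {y : (ℝ ∙ v)ᗮ | ENNReal.ofReal ‖y‖ ≠ 0} = {0}ᶜ := by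
    ext y
    simp
  have hball : (Subtype.val ⁻¹' closedBall (0 : E) r : Set (ℝ ∙ v)ᗮ) = closedBall 0 r := by
    ext y
    simp
  rw [hsupport, hball, inter_comm, ← sdiff_eq, measure_sdiff_null (measure_singleton _)]
  exact (measure_closedBall_pos _ _ hr).ne'

lemma measurable_reflection_sub (e : E) :
    Measurable (Function.uncurry fun v x : E ↦ (ℝ ∙ (e - v))ᗮ.reflection x) := by
  have hformula : (Function.uncurry fun v x : E ↦ (ℝ ∙ (e - v))ᗮ.reflection x) =
      fun p ↦ p.2 - (2 : ℝ) • (⟪e - p.1, p.2⟫ / ‖e - p.1‖ ^ 2) • (e - p.1) := by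
    funext p
    change (ℝ ∙ (e - p.1))ᗮ.reflection p.2 = _
    rw [Submodule.reflection_orthogonal_apply, Submodule.reflection_singleton_apply, neg_sub]
    simp only [two_smul, RCLike.ofReal_real_eq_id, id_eq]
  rw [hformula]
  fun_prop

-- Reflections sending a fixed unit vector `e` to `v` exhibit the measure on `v^⊥` as the image of
-- the one on `e^⊥` under a map depending measurably on `v`.
lemma aemeasurable_hyperplaneMeasure [Nontrivial E] {σ : Measure E} (hσ : ∀ᵐ v ∂σ, ‖v‖ = 1) :
    AEMeasurable (hyperplaneMeasure ((finrank ℝ E : ℝ) - 1)) σ := by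
  obtain ⟨e, he⟩ := exists_norm_eq E zero_le_one
  have := sFinite_hyperplaneMeasure (norm_ne_zero_iff.1 (he.trans_ne one_ne_zero))
  refine ⟨_, measurable_map_of_measurable_uncurry (hyperplaneMeasure ((finrank ℝ E : ℝ) - 1) e)
    (measurable_reflection_sub e), hσ.mono fun v hv ↦ ?_⟩
  have hmap := map_hyperplaneMeasure ((finrank ℝ E : ℝ) - 1) e (ℝ ∙ (e - v))ᗮ.reflection
  rw [Submodule.reflection_sub (he.trans hv.symm)] at hmap
  exact hmap.symm

end HyperplaneMeasure

section SolmonMeasure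

variable [MeasurableSpace E] [BorelSpace E]

variable (E) in
/-- The measure `f ↦ ∫_{S^{d-1}} ∫_{v^⊥} |x| f(x) dH^{d-1}(x) dH^{d-1}(v)`, where `d = dim E`,
on the left-hand side of Solmon's identity. `Measure.bind` has a junk value unless
`v ↦ hyperplaneMeasure (d - 1) v` is a.e.-measurable, see `aemeasurable_hyperplaneMeasure`. -/
def solmonMeasure : Measure E :=
  (μH[(finrank ℝ E : ℝ) - 1].restrict (sphere 0 1)).bind
    (hyperplaneMeasure ((finrank ℝ E : ℝ) - 1))

variable [FiniteDimensional ℝ E]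

lemma lintegral_solmonMeasure [Nontrivial E] {f : E → ℝ≥0∞} (hf : Measurable f) :
    ∫⁻ x, f x ∂solmonMeasure E = ∫⁻ v in sphere (0 : E) 1,
      (∫⁻ x in {x | ⟪v, x⟫ = 0}, ENNReal.ofReal ‖x‖ * f x ∂μH[(finrank ℝ E : ℝ) - 1])
        ∂μH[(finrank ℝ E : ℝ) - 1] := by
  rw [solmonMeasure, Measure.lintegral_bind
    (aemeasurable_hyperplaneMeasure (ae_norm_eq_one_restrict_sphere _)) hf.aemeasurable]
  simp_rw [lintegral_hyperplaneMeasure _ _ hf]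

lemma solmonMeasure_apply [Nontrivial E] {A : Set E} (hA : MeasurableSet A) :
    solmonMeasure E A = ∫⁻ v in sphere (0 : E) 1,
      hyperplaneMeasure ((finrank ℝ E : ℝ) - 1) v A ∂μH[(finrank ℝ E : ℝ) - 1] :=
  Measure.bind_apply hA (aemeasurable_hyperplaneMeasure (ae_norm_eq_one_restrict_sphere _))

variable (E) in
lemma isOrthogonallyInvariant_solmonMeasure [Nontrivial E] :
    IsOrthogonallyInvariant (solmonMeasure E) := by
  refine fun U ↦ ⟨U.continuous.measurable, Measure.ext fun A hA ↦ ?_⟩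
  have hU := U.continuous.measurable
  calc (solmonMeasure E).map U A
    _ = ∫⁻ v in sphere (0 : E) 1, hyperplaneMeasure ((finrank ℝ E : ℝ) - 1) (U v) A
          ∂μH[(finrank ℝ E : ℝ) - 1] := by
      rw [Measure.map_apply hU hA, solmonMeasure_apply (hU hA)]
      simp only [← map_hyperplaneMeasure, Measure.map_apply hU hA]
    _ = ∫⁻ v in sphere (0 : E) 1, hyperplaneMeasure ((finrank ℝ E : ℝ) - 1) v A
          ∂μH[(finrank ℝ E : ℝ) - 1] :=
      (IsOrthogonallyInvariant.hausdorffMeasure_restrict_sphere _ U).lintegral_comp_emb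
        U.toHomeomorph.measurableEmbedding fun v ↦ hyperplaneMeasure _ v A
    _ = solmonMeasure E A := (solmonMeasure_apply hA).symm

lemma solmonMeasure_closedBall [Nontrivial E] {e : E} (he : ‖e‖ = 1) (r : ℝ) :
    solmonMeasure E (closedBall 0 r) =
      hyperplaneMeasure ((finrank ℝ E : ℝ) - 1) e (closedBall 0 r) *
        μH[(finrank ℝ E : ℝ) - 1] (sphere (0 : E) 1) := by
  rw [solmonMeasure_apply measurableSet_closedBall, ← setLIntegral_const]
  refine setLIntegral_congr_fun isClosed_sphere.measurableSet fun v hv ↦ ?_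
  exact hyperplaneMeasure_closedBall_eq_of_norm_eq _
    ((mem_sphere_zero_iff_norm.1 hv).trans he.symm) r

lemma exists_solmonMeasure_eq_smul_volume (hE : 2 ≤ finrank ℝ E) :
    ∃ c : ℝ, 0 < c ∧ solmonMeasure E = ENNReal.ofReal c • volume := by
  have : Nontrivial E := Module.nontrivial_of_finrank_pos (R := ℝ) (by omega)
  obtain ⟨e, he⟩ := exists_norm_eq E zero_le_one
  have he₀ : e ≠ 0 := norm_ne_zero_iff.1 (he.trans_ne one_ne_zero)
  have hball := solmonMeasure_closedBall he
  have hfin : solmonMeasure E (closedBall 0 1) < ∞ := by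
    rw [hball]
    exact ENNReal.mul_lt_top (hyperplaneMeasure_closedBall_lt_top he₀ 1)
      hausdorffMeasure_sphere_lt_top
  have hpos : 0 < solmonMeasure E (closedBall 0 1) := by
    rw [hball]
    exact ENNReal.mul_pos (hyperplaneMeasure_closedBall_pos hE he₀ one_pos).ne'
      hausdorffMeasure_sphere_pos.ne'
  have hsmul := (isOrthogonallyInvariant_solmonMeasure E).eq_smul_volume hfin fun r hr ↦ by
    rw [hball, hball, hyperplaneMeasure_closedBall finrank_sub_one_nonneg e hr, sub_add_cancel,
      rpow_natCast, mul_assoc]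
  have hratio : solmonMeasure E (closedBall 0 1) / volume (closedBall (0 : E) 1) ≠ ∞ :=
    ENNReal.div_ne_top hfin.ne (measure_closedBall_pos _ _ one_pos).ne'
  refine ⟨_, ENNReal.toReal_pos ?_ hratio, by rwa [ENNReal.ofReal_toReal hratio]⟩
  exact ENNReal.div_ne_zero.2 ⟨hpos.ne', measure_closedBall_lt_top.ne⟩

theorem solmon_identity_general (hE : 2 ≤ finrank ℝ E) :
    ∃ c : ℝ, 0 < c ∧ ∀ f : E → ℝ≥0∞, Measurable f →
      ∫⁻ v in sphere (0 : E) 1,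
        (∫⁻ x in {x : E | ⟪v, x⟫ = 0},
            ENNReal.ofReal ‖x‖ * f x ∂(μH[(finrank ℝ E : ℝ) - 1]))
          ∂(μH[(finrank ℝ E : ℝ) - 1])
        = ENNReal.ofReal c * ∫⁻ x, f x := by
  have : Nontrivial E := Module.nontrivial_of_finrank_pos (R := ℝ) (by omega)
  obtain ⟨c, hc, hsolmon⟩ := exists_solmonMeasure_eq_smul_volume hE
  refine ⟨c, hc, fun f hf ↦ ?_⟩
  rw [← lintegral_solmonMeasure hf, hsolmon, lintegral_smul_measure, smul_eq_mul]

end SolmonMeasure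

end Solmon

/-- Solmon's identity on the sphere, `k = 1`. There is a constant
`c_d > 0` such that for every nonnegative Borel function `f` on `ℝ^d`,
`∫_{S^{d-1}} ∫_{v^⊥} |x| f(x) dH^{d-1}(x) dH^{d-1}(v) = c_d ∫_{ℝ^d} f(x) dx`. -/
theorem solmon_identity (d : ℕ) (hd : 2 ≤ d) :
    ∃ c : ℝ, 0 < c ∧ ∀ f : EuclideanSpace ℝ (Fin d) → ℝ≥0∞, Measurable f →
      ∫⁻ v in sphere (0 : EuclideanSpace ℝ (Fin d)) 1,
        (∫⁻ x in {x : EuclideanSpace ℝ (Fin d) | ⟪v, x⟫ = 0},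
            ENNReal.ofReal ‖x‖ * f x ∂(μH[(d : ℝ) - 1]))
          ∂(μH[(d : ℝ) - 1])
        = ENNReal.ofReal c * ∫⁻ x, f x := by
  simpa only [finrank_euclideanSpace_fin] using
    solmon_identity_general (E := EuclideanSpace ℝ (Fin d)) (by rwa [finrank_euclideanSpace_fin])
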